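/- arXiv:1911.08196 — 2 statements merged into one kernel-verified Lean document; each statement's English description precedes it below -/
import Mathlib

section
/- (Reduction, backward direction) Let a DNF instance with p variables and q ≥ 1 clauses be given and let 1 ≤ t ≤ q. If the reduction instance admits a defending strategy with total resource p + (q−t)/q and defending result 0, then there exists a truth assignment to x_1,…,x_p that satisfies at least t clauses. -/
open scoped Classical

/-- A network defending instance: a finite simple undirected graph together with
nonnegative symmetric edge weights `w`, thresholds `LB ≤ UB`, and values `g' ≤ g`. -/
structure DefInstance (V : Type*) where
  G : SimpleGraph V
  w : V → V → ℝ
  w_nonneg : ∀ u v, 0 ≤ w u v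
  w_symm : ∀ u v, w u v = w v u
  LB : V → ℝ
  UB : V → ℝ
  g : V → ℝ
  g' : V → ℝ
  LB_nonneg : ∀ u, 0 ≤ LB u
  LB_le_UB : ∀ u, LB u ≤ UB u
  g'_nonneg : ∀ u, 0 ≤ g' u
  g'_le_g : ∀ u, g' u ≤ g u

variable {V : Type*} [Fintype V]

/-- The defending power of node `u` under resource allocation `r`:
`p_u = r_u + ∑_{v : (u,v) ∈ E} w_{uv} · r_v`. -/
noncomputable def power (I : DefInstance V) (r : V → ℝ) (u : V) : ℝ :=
  r u + ∑ v ∈ Finset.univ.filter (fun v => I.G.Adj u v), I.w u v * r v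

/-- The attacker's gain when attacking node `u`: it is `g_u` if `p_u < LB_u`;
it is `g'_u` if `LB_u ≤ p_u < UB_u` and some neighbor `v` has `p_v < LB_v`;
and `0` otherwise. -/
noncomputable def gain (I : DefInstance V) (r : V → ℝ) (u : V) : ℝ :=
  if power I r u < I.LB u then I.g u
  else if power I r u < I.UB u ∧ ∃ v, I.G.Adj u v ∧ power I r v < I.LB v then I.g' u
  else 0

/-- The defending result of `r`: the maximum attacker's gain over all nodes. -/
noncomputable def defResult (I : DefInstance V) (r : V → ℝ) : ℝ :=
  ⨆ u, gain I r u

/-- `r` is a defending strategy with total resource `R`. -/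
def IsStrategy (r : V → ℝ) (R : ℝ) : Prop :=
  (∀ u, 0 ≤ r u) ∧ ∑ u, r u = R

/-- The value `α` is achievable with resource `R`: some defending strategy with total
resource `R` has defending result at most `α`. -/
def Achievable (I : DefInstance V) (α R : ℝ) : Prop :=
  ∃ r, IsStrategy r R ∧ defResult I r ≤ α

/-! ### The reduction instance from a DNF instance

Variables are `x_1, …, x_p` and clauses are `C_1, …, C_q`; a literal is a pair
`(i, b) : Fin p × Bool`, where `(i, true)` is `x_i` and `(i, false)` is `x̄_i`.
The nodes of the reduction instance are: a variable node for each literal, a clause node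
for each clause, and a connector node `(C_j, a)` for each literal `a` occurring in `C_j`
(connector nodes `(C_j, a)` with `a ∉ C_j` are present as isolated nodes carrying no
edges, zero value, and they play no role). -/

inductive RNode (p q : ℕ) : Type
  | var : Fin p → Bool → RNode p q
  | clause : Fin q → RNode p q
  | conn : Fin q → Fin p → Bool → RNode p q
  deriving DecidableEq, Fintype

/-- Base relation generating the edges: `x_i — x̄_i`; and, for each literal `(i,b) ∈ C j`,
connector `(C_j,(i,b))` is joined to variable node `(i,b)` and to clause node `C_j`. -/
def redRel {p q : ℕ} (C : Fin q → Finset (Fin p × Bool)) :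
    RNode p q → RNode p q → Prop := fun x y =>
  match x, y with
  | .var i _, .var i' _ => i = i'
  | .conn j i b, .var i' b' => i = i' ∧ b = b' ∧ (i, b) ∈ C j
  | .conn j i b, .clause j' => j = j' ∧ (i, b) ∈ C j
  | _, _ => False

/-- Edge weights: `1` on edges incident to a variable node, `0` on edges incident to a
clause node. -/
noncomputable def redW {p q : ℕ} : RNode p q → RNode p q → ℝ := fun x y =>
  match x, y with
  | .clause _, _ => 0
  | _, .clause _ => 0
  | _, _ => 1

/-- Values: `g = g' = 1` on variable and clause nodes, `0` on connectors. -/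
noncomputable def redg {p q : ℕ} : RNode p q → ℝ
  | .conn _ _ _ => 0
  | _ => 1

/-- Lower thresholds: `1` on variable nodes and connectors, `0` on clause nodes. -/
noncomputable def redLB {p q : ℕ} : RNode p q → ℝ
  | .clause _ => 0
  | _ => 1

/-- Upper thresholds: `1` on variable nodes and connectors, `1/q` on clause nodes. -/
noncomputable def redUB {p q : ℕ} : RNode p q → ℝ
  | .clause _ => 1 / (q : ℝ)
  | _ => 1

/-- The reduction instance associated to a DNF instance. -/
noncomputable def redInstance (p q : ℕ) (C : Fin q → Finset (Fin p × Bool)) :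
    DefInstance (RNode p q) where
  G := SimpleGraph.fromRel (redRel C)
  w := redW
  w_nonneg := by intro u v; cases u <;> cases v <;> norm_num [redW]
  w_symm := by intro u v; cases u <;> cases v <;> rfl
  LB := redLB
  UB := redUB
  g := redg
  g' := redg
  LB_nonneg := by intro u; cases u <;> norm_num [redLB]
  LB_le_UB := by intro u; cases u <;> norm_num [redLB, redUB]
  g'_nonneg := by intro u; cases u <;> norm_num [redg]
  g'_le_g := fun _ => le_rfl

/-- An assignment `σ` satisfies a clause `Cl` if every literal of `Cl` is true under `σ`. -/
def Satisfies {p : ℕ} (σ : Fin p → Bool) (Cl : Finset (Fin p × Bool)) : Prop :=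
  ∀ l ∈ Cl, σ l.1 = l.2

/-! If no attack gains anything, both variable nodes of `x_i` reach power `1`, so the resource on
these two nodes and their connectors totals at least `1`. The budget is below `p + 1`, hence this
share is less than `2` for every `i`. A clause node holding less than `1/q` is safe only if all its
connectors reach power `1`, which puts at least one unit on the star of each of its literals. The
stars of `x_i` and `x̄_i` cannot both hold a unit, so the literals whose star does are consistent
and define an assignment satisfying every such clause. An unsatisfied clause therefore costs at
least `1/q` on its own node, and at most `(q - t)/q` is left beyond the `p` units spent on the
variables, so at most `q - t` clauses are unsatisfied. -/

theorem add_card_nsmul_le_sum_add {ι M : Type*} [AddCommMonoid M] [PartialOrder M]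
    [IsOrderedAddMonoid M] {s : Finset ι} {f : ι → M} {a : M} {i : ι}
    (hf : ∀ j ∈ s, a ≤ f j) (hi : i ∈ s) : f i + s.card • a ≤ ∑ j ∈ s, f j + a := by
  have herase : (s.erase i).card • a ≤ ∑ j ∈ s.erase i, f j :=
    Finset.card_nsmul_le_sum _ _ _ fun j hj => hf j (Finset.mem_of_mem_erase hj)
  rw [← Finset.add_sum_erase s f hi, ← Finset.card_erase_add_one hi, succ_nsmul, ← add_assoc]
  gcongr

theorem gain_le_defResult (I : DefInstance V) (r : V → ℝ) (u : V) :
    gain I r u ≤ defResult I r :=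
  le_ciSup (Set.finite_range (gain I r)).bddAbove u

theorem LB_le_power_of_gain_lt {I : DefInstance V} {r : V → ℝ} {u : V}
    (hu : gain I r u < I.g u) : I.LB u ≤ power I r u := by
  by_contra! hlt
  rw [gain, if_pos hlt] at hu
  exact hu.false

theorem LB_le_power_of_adj_of_gain_lt {I : DefInstance V} {r : V → ℝ} {u v : V}
    (hu : gain I r u < I.g' u) (hUB : power I r u < I.UB u) (huv : I.G.Adj u v) :
    I.LB v ≤ power I r v := by
  have hLB : I.LB u ≤ power I r u := LB_le_power_of_gain_lt (hu.trans_le (I.g'_le_g u))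
  by_contra! hlt
  rw [gain, if_neg hLB.not_gt, if_pos ⟨hUB, v, huv, hlt⟩] at hu
  exact hu.false

section Reduction

variable {p q : ℕ}

/-- The nodes of the reduction instance as a disjoint union of literals, clauses, and
(clause, literal) pairs, through which sums over the nodes split by kind. -/
def RNode.equivSum (p q : ℕ) : RNode p q ≃ (Fin p × Bool) ⊕ Fin q ⊕ Fin q × Fin p × Bool where
  toFun
    | .var i b => .inl (i, b)
    | .clause j => .inr (.inl j)
    | .conn j i b => .inr (.inr (j, i, b))
  invFun
    | .inl (i, b) => .var i b
    | .inr (.inl j) => .clause j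
    | .inr (.inr (j, i, b)) => .conn j i b
  left_inv := by rintro (_ | _ | _) <;> rfl
  right_inv := by rintro (_ | _ | _) <;> rfl

theorem RNode.sum_univ {M : Type*} [AddCommMonoid M] (f : RNode p q → M) :
    ∑ u, f u = ∑ i, ∑ b, f (.var i b) + (∑ j, f (.clause j) + ∑ j, ∑ i, ∑ b, f (.conn j i b)) := by
  rw [← (RNode.equivSum p q).symm.sum_comp f]
  simp only [Fintype.sum_sum_type, Fintype.sum_prod_type]
  rfl

variable {C : Fin q → Finset (Fin p × Bool)}

theorem redInstance_adj_var_var {i i' : Fin p} {b b' : Bool} :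
    (redInstance p q C).G.Adj (.var i b) (.var i' b') ↔ i' = i ∧ b' = !b := by
  simp only [redInstance, SimpleGraph.fromRel_adj, redRel, ne_eq, RNode.var.injEq]
  cases b <;> cases b' <;> grind

theorem redInstance_adj_conn_var {j : Fin q} {i i' : Fin p} {b b' : Bool} :
    (redInstance p q C).G.Adj (.conn j i b) (.var i' b') ↔ i' = i ∧ b' = b ∧ (i, b) ∈ C j := by
  simp [redInstance, redRel, eq_comm]

theorem redInstance_adj_conn_clause {j j' : Fin q} {i : Fin p} {b : Bool} :
    (redInstance p q C).G.Adj (.conn j i b) (.clause j') ↔ j = j' ∧ (i, b) ∈ C j := by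
  simp [redInstance, redRel]

theorem redInstance_not_adj_conn_conn {j j' : Fin q} {i i' : Fin p} {b b' : Bool} :
    ¬(redInstance p q C).G.Adj (.conn j i b) (.conn j' i' b') := by
  simp [redInstance, redRel]

variable (C) (r : RNode p q → ℝ)

theorem power_clause (j : Fin q) : power (redInstance p q C) r (.clause j) = r (.clause j) := by
  simp [power, redInstance, redW]

theorem power_conn (j : Fin q) (i : Fin p) (b : Bool) :
    power (redInstance p q C) r (.conn j i b) =
      r (.conn j i b) + if (i, b) ∈ C j then r (.var i b) else 0 := by
  rw [power, Finset.sum_filter, RNode.sum_univ]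
  simp only [redInstance_adj_conn_var, redInstance_not_adj_conn_conn, ite_and, if_false,
    Finset.sum_ite_irrel, Finset.sum_ite_eq', Finset.sum_const_zero, Finset.mem_univ, if_true]
  simp [redInstance, redW]

theorem power_var (i : Fin p) (b : Bool) :
    power (redInstance p q C) r (.var i b) =
      r (.var i b) + r (.var i !b) + ∑ j, if (i, b) ∈ C j then r (.conn j i b) else 0 := by
  rw [power, Finset.sum_filter, RNode.sum_univ]
  simp only [redInstance_adj_var_var, SimpleGraph.adj_comm _ (RNode.var i b) (.conn _ _ _),
    redInstance_adj_conn_var, ite_and, Finset.sum_ite_irrel, Finset.sum_ite_eq, Finset.sum_ite_eq',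
    Finset.sum_const_zero, Finset.mem_univ, if_true]
  simp [redInstance, redW, add_assoc]

/-- The resource on the star of the literal `(i, b)`: its variable node and its connectors
`(C_j, (i, b))` for all `j`, including the isolated ones with `(i, b) ∉ C_j`. -/
def literalResource (i : Fin p) (b : Bool) : ℝ :=
  r (.var i b) + ∑ j, r (.conn j i b)

/-- The resource on the stars of both literals of the variable `i`. The total resource splits into
these shares and the resource on the clause nodes. -/
def variableResource (i : Fin p) : ℝ :=
  ∑ b, literalResource r i b

/-- The assignment read off from a defending strategy: a variable is true if the star of its
positive literal receives at least one unit of resource. -/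
noncomputable def assignmentOf (i : Fin p) : Bool :=
  decide (1 ≤ literalResource r i true)

theorem sum_eq_sum_variableResource_add :
    ∑ u, r u = ∑ i, variableResource r i + ∑ j, r (.clause j) := by
  have hcomm : ∑ j, ∑ i, ∑ b, r (.conn j i b) = ∑ i, ∑ b, ∑ j, r (.conn j i b) := by
    rw [Finset.sum_comm]
    exact Finset.sum_congr rfl fun i _ => Finset.sum_comm
  simp only [RNode.sum_univ, variableResource, literalResource, Finset.sum_add_distrib, hcomm]
  ring

variable {C r}

theorem power_conn_le_literalResource (hr : ∀ u, 0 ≤ r u) (j : Fin q) (i : Fin p) (b : Bool) :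
    power (redInstance p q C) r (.conn j i b) ≤ literalResource r i b := by
  have hvar : (if (i, b) ∈ C j then r (.var i b) else 0) ≤ r (.var i b) := by
    split_ifs
    exacts [le_rfl, hr _]
  have hconn : r (.conn j i b) ≤ ∑ j, r (.conn j i b) :=
    Finset.single_le_sum (fun j _ => hr (.conn j i b)) (Finset.mem_univ j)
  rw [power_conn, literalResource]
  linarith

theorem power_var_le_variableResource (hr : ∀ u, 0 ≤ r u) (i : Fin p) (b : Bool) :
    power (redInstance p q C) r (.var i b) ≤ variableResource r i := by
  have hconn : (∑ j, if (i, b) ∈ C j then r (.conn j i b) else 0) ≤ ∑ j, r (.conn j i b) := by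
    gcongr with j
    split_ifs
    exacts [le_rfl, hr _]
  have hnot : r (.var i !b) ≤ literalResource r i !b :=
    le_add_of_nonneg_right (Finset.sum_nonneg fun j _ => hr _)
  have hsplit : variableResource r i = literalResource r i b + literalResource r i !b := by
    cases b <;> simp [variableResource, add_comm]
  rw [power_var, hsplit, literalResource]
  linarith

theorem one_le_variableResource (hr : ∀ u, 0 ≤ r u)
    (hgain : ∀ u, gain (redInstance p q C) r u ≤ 0) (i : Fin p) : 1 ≤ variableResource r i :=
  (LB_le_power_of_gain_lt ((hgain (.var i true)).trans_lt one_pos)).trans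
    (power_var_le_variableResource hr i true)

theorem one_le_literalResource_of_mem (hr : ∀ u, 0 ≤ r u)
    {j : Fin q} (hgain : gain (redInstance p q C) r (.clause j) ≤ 0)
    (hj : r (.clause j) < 1 / q) {i : Fin p} {b : Bool} (hmem : (i, b) ∈ C j) :
    1 ≤ literalResource r i b := by
  have hUB : power (redInstance p q C) r (.clause j) < (redInstance p q C).UB (.clause j) := by
    rwa [power_clause]
  have hadj : (redInstance p q C).G.Adj (.clause j) (.conn j i b) :=
    (redInstance_adj_conn_clause.2 ⟨rfl, hmem⟩).symm
  exact (LB_le_power_of_adj_of_gain_lt (hgain.trans_lt one_pos) hUB hadj).trans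
    (power_conn_le_literalResource hr j i b)

theorem variableResource_lt_two (hr : ∀ u, 0 ≤ r u)
    (hgain : ∀ u, gain (redInstance p q C) r u ≤ 0) (hsum : ∑ u, r u < p + 1) (i : Fin p) :
    variableResource r i < 2 := by
  have hle : variableResource r i + p ≤ ∑ i, variableResource r i + 1 := by
    simpa using add_card_nsmul_le_sum_add
      (fun i _ => one_le_variableResource hr hgain i) (Finset.mem_univ i)
  have hclause : 0 ≤ ∑ j, r (.clause j) := Finset.sum_nonneg fun j _ => hr _
  rw [sum_eq_sum_variableResource_add] at hsum
  linarith

theorem satisfies_assignmentOf (hr : ∀ u, 0 ≤ r u) {j : Fin q}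
    (hgain : gain (redInstance p q C) r (.clause j) ≤ 0) (htwo : ∀ i, variableResource r i < 2)
    (hj : r (.clause j) < 1 / q) : Satisfies (assignmentOf r) (C j) := by
  rintro ⟨i, b⟩ hmem
  have hone : 1 ≤ literalResource r i b := one_le_literalResource_of_mem hr hgain hj hmem
  cases b with
  | true => exact decide_eq_true hone
  | false =>
    have hi : literalResource r i true + literalResource r i false < 2 := by
      simpa [variableResource] using htwo i
    exact decide_eq_false (by linarith)

theorem card_not_satisfies_div_le (hr : ∀ u, 0 ≤ r u)
    (hgain : ∀ u, gain (redInstance p q C) r u ≤ 0) (hsum : ∑ u, r u < p + 1) :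
    ((Finset.univ.filter fun j => ¬Satisfies (assignmentOf r) (C j)).card : ℝ) / q
      ≤ ∑ u, r u - p := by
  set unsat := Finset.univ.filter fun j => ¬Satisfies (assignmentOf r) (C j)
  have htwo := variableResource_lt_two hr hgain hsum
  have hclause : ∀ j ∈ unsat, 1 / (q : ℝ) ≤ r (.clause j) := fun j hj => by
    by_contra! hlt
    exact (Finset.mem_filter.1 hj).2 (satisfies_assignmentOf hr (hgain _) htwo hlt)
  have hvar : (p : ℝ) ≤ ∑ i, variableResource r i := by
    simpa using Finset.card_nsmul_le_sum Finset.univ (variableResource r) 1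
      fun i _ => one_le_variableResource hr hgain i
  calc (unsat.card : ℝ) / q = unsat.card • (1 / (q : ℝ)) := by rw [nsmul_eq_mul, mul_one_div]
    _ ≤ ∑ j ∈ unsat, r (.clause j) := Finset.card_nsmul_le_sum _ _ _ hclause
    _ ≤ ∑ j, r (.clause j) := Finset.sum_le_univ_sum_of_nonneg fun j => hr _
    _ ≤ ∑ u, r u - p := by rw [sum_eq_sum_variableResource_add]; linarith

end Reduction

/-- reduction, backward direction: if the reduction instance admits a
defending strategy with total resource `p + (q - t)/q` and defending result `0`, then some
truth assignment satisfies at least `t` of the `q` clauses. -/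
theorem reduction_backward (p q : ℕ) (hq : 1 ≤ q) (C : Fin q → Finset (Fin p × Bool))
    (t : ℕ) (ht : 1 ≤ t) (htq : t ≤ q)
    (h : ∃ r : RNode p q → ℝ, IsStrategy r ((p : ℝ) + ((q : ℝ) - (t : ℝ)) / (q : ℝ)) ∧
      defResult (redInstance p q C) r = 0) :
    ∃ σ : Fin p → Bool, t ≤ (Finset.univ.filter fun j => Satisfies σ (C j)).card := by
  obtain ⟨r, ⟨hr, hsum⟩, hres⟩ := h
  have hgain : ∀ u, gain (redInstance p q C) r u ≤ 0 := fun u => hres ▸ gain_le_defResult _ r u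
  have hq0 : (0 : ℝ) < q := by exact_mod_cast hq
  have hbudget : ∑ u, r u < p + 1 := by
    have ht1 : (1 : ℝ) ≤ t := by exact_mod_cast ht
    rw [hsum, add_lt_add_iff_left, div_lt_one hq0]
    linarith
  refine ⟨assignmentOf r, ?_⟩
  have hunsat := card_not_satisfies_div_le hr hgain hbudget
  rw [hsum, add_sub_cancel_left, div_le_div_iff_of_pos_right hq0, le_sub_iff_add_le] at hunsat
  have hcard := Finset.card_filter_add_card_filter_not (s := Finset.univ)
    fun j => Satisfies (assignmentOf r) (C j)
  rw [Finset.card_univ, Fintype.card_fin] at hcard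
  norm_cast at hunsat
  lia
end

section
/- (LP rounding, 2-approximation) Let α ≥ 0 and R ≥ 0. If (y, r) is a feasible solution of LP(α, R/2), then the map r' defined by r'_u = 2·r_u for all u ∈ V is a defending strategy with total resource R whose defending result is at most α. Consequently, if α is achievable with resource R/2, then α is achievable with resource R via doubling a feasible LP solution. -/
open scoped Classical

variable {V : Type*} [Fintype V]

/-- The LP relaxation `LP(α, R')`: reals `y_u` (for `u ∈ B_α ∪ (V∖A_α)`, i.e. `g'_u > α`
or `¬ g_u > α`) and `r_u ≥ 0` for `u ∈ V` with: `y_u + y_v ≥ 1` for every edge `(u,v)`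
with `u ∈ B_α`, `v ∈ V∖A_α`; `p_u ≥ LB_u + y_u·(UB_u − LB_u)` for `u ∈ B_α`;
`p_u ≥ LB_u` for `u ∈ A_α∖B_α`; `p_v ≥ y_v·LB_v` for `v ∈ V∖A_α`; and `∑_u r_u = R'`. -/
def LPFeasible {V : Type*} [Fintype V] (I : DefInstance V) (α R' : ℝ)
    (y r : V → ℝ) : Prop :=
  (∀ u, (I.g' u > α ∨ ¬ I.g u > α) → 0 ≤ y u) ∧
  (∀ u, 0 ≤ r u) ∧
  (∀ u v, I.G.Adj u v → I.g' u > α → ¬ I.g v > α → 1 ≤ y u + y v) ∧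
  (∀ u, I.g' u > α → I.LB u + y u * (I.UB u - I.LB u) ≤ power I r u) ∧
  (∀ u, I.g u > α → ¬ I.g' u > α → I.LB u ≤ power I r u) ∧
  (∀ v, ¬ I.g v > α → y v * I.LB v ≤ power I r v) ∧
  ∑ u, r u = R'

/-!
At a crucial endpoint `u` of an edge whose other endpoint `v` is not vulnerable, the LP only asks
for `y u + y v ≥ 1`, so one of `y u`, `y v` is at least `1/2`. Doubling the resources doubles all
powers, which then reach `UB u` in the first case and `LB v` in the second, as a strategy of result
at most `α` requires. Conversely, such a strategy gives a feasible 0-1 solution of the LP.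
-/

section

variable {I : DefInstance V} {α R : ℝ} {y r : V → ℝ} {u v : V}

theorem power_nonneg (hr : ∀ u, 0 ≤ r u) : 0 ≤ power I r u :=
  add_nonneg (hr u) (Finset.sum_nonneg fun v _ => mul_nonneg (I.w_nonneg u v) (hr v))

theorem power_const_mul (c : ℝ) : power I (fun u => c * r u) u = c * power I r u := by
  simp only [power, mul_add, Finset.mul_sum, mul_left_comm]

theorem IsStrategy.const_mul (hr : IsStrategy r R) {c : ℝ} (hc : 0 ≤ c) :
    IsStrategy (fun u => c * r u) (c * R) :=
  ⟨fun u => mul_nonneg hc (hr.1 u), by rw [← Finset.mul_sum, hr.2]⟩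

theorem gain_le_iff (hα : 0 ≤ α) :
    gain I r u ≤ α ↔
      (α < I.g u → I.LB u ≤ power I r u) ∧
      (∀ v, I.G.Adj u v → α < I.g' u → I.UB u ≤ power I r u ∨ I.LB v ≤ power I r v) := by
  have g'_le_g := I.g'_le_g u
  unfold gain
  split_ifs <;> grind

theorem defResult_le_iff (hα : 0 ≤ α) :
    defResult I r ≤ α ↔
      (∀ u, α < I.g u → I.LB u ≤ power I r u) ∧
      (∀ u v, I.G.Adj u v → α < I.g' u → I.UB u ≤ power I r u ∨ I.LB v ≤ power I r v) := by
  have forall_gain : defResult I r ≤ α ↔ ∀ u, gain I r u ≤ α :=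
    ⟨fun h u => (le_ciSup (Set.finite_range (gain I r)).bddAbove u).trans h,
      fun h => Real.iSup_le h hα⟩
  simp only [forall_gain, gain_le_iff hα, forall_and]

namespace LPFeasible

theorem isStrategy (h : LPFeasible I α R y r) : IsStrategy r R :=
  ⟨h.2.1, h.2.2.2.2.2.2⟩

theorem LB_le_power_of_lt_g (h : LPFeasible I α R y r) (hu : α < I.g u) :
    I.LB u ≤ power I r u := by
  obtain ⟨y_nonneg, -, -, crucial, vulnerable, -, -⟩ := h
  by_cases hu' : α < I.g' u
  · calc I.LB u ≤ I.LB u + y u * (I.UB u - I.LB u) :=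
          le_add_of_nonneg_right
            (mul_nonneg (y_nonneg u (.inl hu')) (sub_nonneg.2 (I.LB_le_UB u)))
      _ ≤ power I r u := crucial u hu'
  · exact vulnerable u hu hu'

theorem UB_le_two_mul_power_of_half_le (h : LPFeasible I α R y r) (hu : α < I.g' u)
    (hy : 1 / 2 ≤ y u) : I.UB u ≤ 2 * power I r u := by
  obtain ⟨-, -, -, crucial, -, -, -⟩ := h
  have half_gap : 1 / 2 * (I.UB u - I.LB u) ≤ y u * (I.UB u - I.LB u) :=
    mul_le_mul_of_nonneg_right hy (sub_nonneg.2 (I.LB_le_UB u))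
  linarith [crucial u hu, I.LB_nonneg u]

theorem LB_le_two_mul_power_of_half_le (h : LPFeasible I α R y r) (hv : ¬ α < I.g v)
    (hy : 1 / 2 ≤ y v) : I.LB v ≤ 2 * power I r v := by
  obtain ⟨-, -, -, -, -, nonvulnerable, -⟩ := h
  have half_LB : 1 / 2 * I.LB v ≤ y v * I.LB v := mul_le_mul_of_nonneg_right hy (I.LB_nonneg v)
  linarith [nonvulnerable v hv]

theorem LB_le_two_mul_power_of_lt_g (h : LPFeasible I α R y r) (hu : α < I.g u) :
    I.LB u ≤ 2 * power I r u := by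
  have nonneg : 0 ≤ power I r u := power_nonneg h.isStrategy.1
  linarith [h.LB_le_power_of_lt_g hu]

theorem UB_le_or_LB_le_two_mul_power (h : LPFeasible I α R y r) (huv : I.G.Adj u v)
    (hu : α < I.g' u) : I.UB u ≤ 2 * power I r u ∨ I.LB v ≤ 2 * power I r v := by
  by_cases hv : α < I.g v
  · exact .inr (h.LB_le_two_mul_power_of_lt_g hv)
  · have covered : 1 ≤ y u + y v := h.2.2.1 u v huv hu hv
    obtain hyu | hyv : 1 / 2 ≤ y u ∨ 1 / 2 ≤ y v := by
      by_contra! both_small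
      linarith
    · exact .inl (h.UB_le_two_mul_power_of_half_le hu hyu)
    · exact .inr (h.LB_le_two_mul_power_of_half_le hv hyv)

theorem defResult_two_mul_le (h : LPFeasible I α R y r) (hα : 0 ≤ α) :
    defResult I (fun u => 2 * r u) ≤ α := by
  simp only [defResult_le_iff hα, power_const_mul]
  exact ⟨fun _ => h.LB_le_two_mul_power_of_lt_g, fun _ _ => h.UB_le_or_LB_le_two_mul_power⟩

end LPFeasible

/-- The 0-1 assignment to the LP variables `y` given by an allocation `r`: `y u = 1` exactly when
the power at `u` reaches `UB u` (for `u` crucial) or `LB u` (for other `u`). Its values at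
vulnerable nodes that are not crucial, where the LP has no variable, are immaterial. -/
noncomputable def integralSolution (I : DefInstance V) (α : ℝ) (r : V → ℝ) (u : V) : ℝ :=
  if (if α < I.g' u then I.UB u else I.LB u) ≤ power I r u then 1 else 0

theorem lpFeasible_integralSolution (hα : 0 ≤ α) (hr : IsStrategy r R)
    (h : defResult I r ≤ α) : LPFeasible I α R (integralSolution I α r) r := by
  obtain ⟨LB_le, UB_or_LB_le⟩ := (defResult_le_iff hα).1 h
  have lt_g {u : V} (hu : α < I.g' u) : α < I.g u := hu.trans_le (I.g'_le_g u)
  have y_nonneg (u : V) : 0 ≤ integralSolution I α r u := by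
    unfold integralSolution
    positivity
  have y_crucial {u : V} (hu : α < I.g' u) :
      integralSolution I α r u = if I.UB u ≤ power I r u then 1 else 0 := by
    rw [integralSolution, if_pos hu]
  have y_nonvulnerable {v : V} (hv : ¬ α < I.g v) :
      integralSolution I α r v = if I.LB v ≤ power I r v then 1 else 0 := by
    rw [integralSolution, if_neg (mt lt_g hv)]
  refine ⟨fun u _ => y_nonneg u, hr.1, fun u v huv hu hv => ?_, fun u hu => ?_,
    fun u hu _ => LB_le u hu, fun v hv => ?_, hr.2⟩
  · obtain hUB | hLB := UB_or_LB_le u v huv hu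
    · rw [y_crucial hu, if_pos hUB]
      exact le_add_of_nonneg_right (y_nonneg v)
    · rw [y_nonvulnerable hv, if_pos hLB]
      exact le_add_of_nonneg_left (y_nonneg u)
  · rw [y_crucial hu]
    split_ifs with hUB
    · rwa [one_mul, add_sub_cancel]
    · rw [zero_mul, add_zero]
      exact LB_le u (lt_g hu)
  · rw [y_nonvulnerable hv]
    split_ifs with hLB
    · rwa [one_mul]
    · rw [zero_mul]
      exact power_nonneg hr.1

end

/-- LP rounding, 2-approximation: if `(y, r)` is feasible for
`LP(α, R/2)`, then `r' = 2·r` is a defending strategy with total resource `R` and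
defending result at most `α`; consequently if `α` is achievable with resource `R/2`
then it is achievable with resource `R`. -/
theorem LP_rounding {V : Type*} [Fintype V] [Nonempty V] (I : DefInstance V)
    (α R : ℝ) (hα : 0 ≤ α) (hR : 0 ≤ R) :
    (∀ y r : V → ℝ, LPFeasible I α (R / 2) y r →
      IsStrategy (fun u => 2 * r u) R ∧ defResult I (fun u => 2 * r u) ≤ α) ∧
    (Achievable I α (R / 2) → Achievable I α R) := by
  have doubling (y r : V → ℝ) (h : LPFeasible I α (R / 2) y r) :
      IsStrategy (fun u => 2 * r u) R ∧ defResult I (fun u => 2 * r u) ≤ α := by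
    refine ⟨?_, h.defResult_two_mul_le hα⟩
    simpa only [mul_div_cancel₀ R two_ne_zero] using h.isStrategy.const_mul zero_le_two
  refine ⟨doubling, ?_⟩
  rintro ⟨r, hr, hresult⟩
  exact ⟨_, doubling _ r (lpFeasible_integralSolution hα hr hresult)⟩
end
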